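/- Let Ω be a nonempty open subset of ℝⁿ. For sequences w = (w_λ)_{λ∈ℕ} of smooth real-valued functions on Ω, define: w ∈ I_nd iff there exists a closed nowhere dense set Γ ⊆ Ω such that for each x ∈ Ω \ Γ there is λ ∈ ℕ with w_μ(x) = 0 for all μ ≥ λ; and w ∈ J_{B-I} iff the same condition holds with Γ replaced by some meagre set Σ ⊆ Ω. Then J_{B-I} = I_nd. -/

import Mathlib

open Set

/-- `G` is a closed nowhere dense subset of `Om`: it is contained in `Om`, closed in the
subspace topology of `Om` (its closure meets `Om` only inside `G`), and has empty interior
(for `G ⊆ Om` with `Om` open, the interior relative to `Om` coincides with the interior). -/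
def ClosedNwdIn {n : ℕ} (G Om : Set (Fin n → ℝ)) : Prop :=
  G ⊆ Om ∧ closure G ∩ Om ⊆ G ∧ interior G = ∅

/-- `S` is meagre (of first Baire category) in `Om`: it is contained in a countable union
of closed nowhere dense subsets of `Om`. -/
def MeagreIn {n : ℕ} (S Om : Set (Fin n → ℝ)) : Prop :=
  S ⊆ Om ∧ ∃ C : ℕ → Set (Fin n → ℝ), (∀ k, ClosedNwdIn (C k) Om) ∧ S ⊆ ⋃ k, C k

/-!
For functions continuous on `Om`, the points of `Om` at which `w` fails to vanish eventually form
the limit superior of the open sets `{x ∈ Om | w m x ≠ 0}`, hence a Gδ set. In a Baire space a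
meagre Gδ set `s` is nowhere dense: `s ∪ (closure s)ᶜ` is a dense Gδ set, so removing the meagre
set `s` from it leaves a dense set, and this set lies in `(closure s)ᶜ`. Admitting a meagre, or a
closed nowhere dense, set of exceptions amounts to asking that this one set be meagre, or nowhere
dense.
-/

open Filter Topology

section TopologicalSpace

variable {X Y ι : Type*} [TopologicalSpace X] [TopologicalSpace Y] {s : Set X}

theorem isGδ_setOfPred_frequently_mem {F : Filter ι} [F.IsCountablyGenerated] {U : ι → Set X}
    (hU : ∀ i, IsOpen (U i)) : IsGδ {x | ∃ᶠ i in F, x ∈ U i} := by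
  obtain ⟨b, hb⟩ := F.exists_antitone_basis
  have heq : {x | ∃ᶠ i in F, x ∈ U i} = ⋂ k, ⋃ i ∈ b k, U i := by
    ext x
    simp only [mem_ofPred_eq, hb.toHasBasis.frequently_iff, true_imp_iff, mem_iInter, mem_iUnion,
      exists_prop]
  rw [heq]
  exact .iInter_of_isOpen fun k => isOpen_biUnion fun i _ => hU i

theorem isNowhereDense_iff_of_isLocallyClosed (hs : IsLocallyClosed s) :
    IsNowhereDense s ↔ interior s = ∅ := by
  refine ⟨fun h => subset_eq_empty (interior_mono subset_closure) h, fun hempty => ?_⟩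
  have hsub : interior (closure s) ∩ coborder s ⊆ interior s :=
    interior_maximal ((inter_subset_inter_left _ interior_subset).trans closure_inter_coborder.le)
      (isOpen_interior.inter hs.isOpen_coborder)
  by_contra hne
  obtain ⟨x, hx⟩ :=
    dense_coborder.inter_open_nonempty _ isOpen_interior (nonempty_iff_ne_empty.2 hne)
  exact (hempty ▸ hsub hx : x ∈ (∅ : Set X))

variable [BaireSpace X]

theorem isMeagre_iff_isNowhereDense_of_isGδ (hs : IsGδ s) : IsMeagre s ↔ IsNowhereDense s := by
  refine ⟨fun hmeagre => ?_, IsNowhereDense.isMeagre⟩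
  have hcoborder : IsGδ (coborder s) := by
    rw [coborder_eq_union_closure_compl]
    exact hs.union isClosed_closure.isOpen_compl.isGδ
  have hdense : Dense (coborder s ∩ sᶜ) :=
    dense_of_mem_residual (inter_mem (residual_of_dense_Gδ hcoborder dense_coborder) hmeagre)
  have hsub : coborder s ∩ sᶜ ⊆ (closure s)ᶜ := by
    rw [coborder_eq_union_closure_compl]
    exact fun x hx => hx.1.resolve_left hx.2
  exact interior_eq_empty_iff_dense_compl.2 (hdense.mono hsub)

theorem stmt4_general [T1Space Y] {F : Filter ι} [F.IsCountablyGenerated] {Om : Set X}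
    (hOm : IsOpen Om) {w : ι → X → Y} (hw : ∀ i, ContinuousOn (w i) Om) (c : Y) :
    IsMeagre {x ∈ Om | ¬∀ᶠ i in F, w i x = c} ↔
      IsNowhereDense {x ∈ Om | ¬∀ᶠ i in F, w i x = c} := by
  have hU : ∀ i, IsOpen (Om ∩ w i ⁻¹' {c}ᶜ) := fun i =>
    (hw i).isOpen_inter_preimage hOm isOpen_compl_singleton
  have heq : {x ∈ Om | ¬∀ᶠ i in F, w i x = c} = {x | ∃ᶠ i in F, x ∈ Om ∩ w i ⁻¹' {c}ᶜ} := by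
    ext x
    simp only [mem_ofPred_eq, mem_inter_iff, mem_preimage, mem_compl_iff, mem_singleton_iff,
      frequently_and_distrib_left, not_eventually]
  rw [heq]
  exact isMeagre_iff_isNowhereDense_of_isGδ (isGδ_setOfPred_frequently_mem hU)

end TopologicalSpace

section Euclidean

variable {n : ℕ} {Om G S : Set (Fin n → ℝ)}

theorem ClosedNwdIn.isNowhereDense (hG : ClosedNwdIn G Om) (hOm : IsOpen Om) :
    IsNowhereDense G := by
  obtain ⟨hGOm, hclosed, hempty⟩ := hG
  have heq : G = Om ∩ closure G :=
    (subset_inter hGOm subset_closure).antisymm (inter_comm Om _ ▸ hclosed)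
  have hlocal : IsLocallyClosed G := ⟨Om, closure G, hOm, isClosed_closure, heq⟩
  exact (isNowhereDense_iff_of_isLocallyClosed hlocal).2 hempty

theorem closedNwdIn_closure_inter (hS : IsNowhereDense S) :
    ClosedNwdIn (closure S ∩ Om) Om :=
  ⟨inter_subset_right,
    inter_subset_inter_left _ (closure_minimal inter_subset_left isClosed_closure),
    subset_eq_empty (interior_mono inter_subset_left) hS⟩

theorem meagreIn_iff (hOm : IsOpen Om) : MeagreIn S Om ↔ S ⊆ Om ∧ IsMeagre S := by
  refine and_congr_right fun hSOm => ⟨?_, fun hS => ?_⟩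
  · rintro ⟨C, hC, hSC⟩
    exact (isMeagre_iUnion fun k => ((hC k).isNowhereDense hOm).isMeagre).mono hSC
  · obtain ⟨T, hT, hTcount, hST⟩ := isMeagre_iff_countable_union_isNowhereDense.1 hS
    obtain ⟨C, hC⟩ := (hTcount.insert ∅).exists_eq_range (insert_nonempty ∅ T)
    have hCnwd : ∀ k, IsNowhereDense (C k) := fun k =>
      (hC ▸ mem_range_self k : C k ∈ insert ∅ T).elim (· ▸ isNowhereDense_empty) (hT _)
    refine ⟨fun k => closure (C k) ∩ Om, fun k => closedNwdIn_closure_inter (hCnwd k), ?_⟩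
    intro x hx
    obtain ⟨t, ht, hxt⟩ := hST hx
    obtain ⟨k, rfl⟩ : t ∈ range C := hC ▸ mem_insert_of_mem ∅ ht
    exact mem_iUnion.2 ⟨k, subset_closure hxt, hSOm hx⟩

theorem exists_meagreIn_forall_diff_iff (hOm : IsOpen Om) {p : (Fin n → ℝ) → Prop} :
    (∃ S, MeagreIn S Om ∧ ∀ x ∈ Om \ S, p x) ↔ IsMeagre {x ∈ Om | ¬p x} := by
  constructor
  · rintro ⟨S, hS, hp⟩
    exact ((meagreIn_iff hOm).1 hS).2.mono fun x hx => by_contra fun hxS => hx.2 (hp x ⟨hx.1, hxS⟩)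
  · exact fun h => ⟨_, (meagreIn_iff hOm).2 ⟨sep_subset _ _, h⟩,
      fun x hx => by_contra fun hpx => hx.2 ⟨hx.1, hpx⟩⟩

theorem exists_closedNwdIn_forall_diff_iff (hOm : IsOpen Om) {p : (Fin n → ℝ) → Prop} :
    (∃ G, ClosedNwdIn G Om ∧ ∀ x ∈ Om \ G, p x) ↔ IsNowhereDense {x ∈ Om | ¬p x} := by
  constructor
  · rintro ⟨G, hG, hp⟩
    exact (hG.isNowhereDense hOm).mono fun x hx => by_contra fun hxG => hx.2 (hp x ⟨hx.1, hxG⟩)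
  · exact fun h => ⟨_, closedNwdIn_closure_inter h,
      fun x hx => by_contra fun hpx => hx.2 ⟨subset_closure ⟨hx.1, hpx⟩, hx.1⟩⟩

end Euclidean

/-- For sequences `w = (w l)` of smooth real-valued functions on a nonempty
open `Om ⊆ ℝⁿ`: `w ∈ J_{B-I}` iff there is a meagre `S ⊆ Om` with eventual pointwise vanishing
of `w` off `S`, and `w ∈ I_nd` iff the same holds with `S` replaced by a closed nowhere dense
set `G ⊆ Om`.  Then `J_{B-I} = I_nd`. -/
theorem stmt4 (n : ℕ) (Om : Set (Fin n → ℝ)) (hOm : IsOpen Om) (hne : Om.Nonempty) :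
    {w : ℕ → (Fin n → ℝ) → ℝ | (∀ l, ContDiffOn ℝ (⊤ : ℕ∞) (w l) Om) ∧
        ∃ S : Set (Fin n → ℝ), MeagreIn S Om ∧
          ∀ x ∈ Om \ S, ∃ l : ℕ, ∀ m : ℕ, l ≤ m → w m x = 0} =
    {w : ℕ → (Fin n → ℝ) → ℝ | (∀ l, ContDiffOn ℝ (⊤ : ℕ∞) (w l) Om) ∧
        ∃ G : Set (Fin n → ℝ), ClosedNwdIn G Om ∧
          ∀ x ∈ Om \ G, ∃ l : ℕ, ∀ m : ℕ, l ≤ m → w m x = 0} := by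
  ext w
  refine and_congr_right fun hw => ?_
  rw [exists_meagreIn_forall_diff_iff hOm, exists_closedNwdIn_forall_diff_iff hOm]
  simpa only [eventually_atTop] using
    stmt4_general (F := atTop) hOm (fun l => (hw l).continuousOn) 0
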